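/- Let q be an odd prime power with q ≡ 1 (mod 4), let k be a divisor of q−1 with 3 < k < q−1, suppose e = (q−1)/k is even, and let n be an odd positive integer. If (q,k) gives a 3-design, then (q^n,k) gives a 3-design (note k divides q^n − 1 and q^n ≡ 1 (mod 4)). -/

import Mathlib

/-!
Setting: `F` is a finite field of order `q`. The projective line `PG(1,q)` is
modelled as `Projectivization F (Fin 2 → F)`. Since scalar matrices act trivially
on the projective line, the images of a set under all elements of `SL(2,F)` form
exactly its `PSL(2,F)`-orbit; `mapSL g` is the map of the projective line induced
by `g : SL(2,F)`. For `k ∣ q - 1`, the unique subgroup of order `k` of `Fˣ` is the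
set of `k`-th roots of unity `{x : F | x ^ k = 1}`, embedded into the projective
line via `x ↦ [x : 1]`. `(q, k)` gives a 3-design iff there is `lam > 0` such that
every 3-subset of the projective line lies in exactly `lam` blocks of the orbit.
-/

noncomputable section

open Matrix

/-- The point at infinity `[1 : 0]` of the projective line over `F`. -/
def inftyPt (F : Type) [Field F] : Projectivization F (Fin 2 → F) :=
  Projectivization.mk F ![1, 0] (by
    intro h
    simpa using congrFun h 0)

/-- The embedding of `F` into the projective line, `x ↦ [x : 1]`. -/
def embedPt (F : Type) [Field F] (x : F) : Projectivization F (Fin 2 → F) :=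
  Projectivization.mk F ![x, 1] (by
    intro h
    simpa using congrFun h 1)

/-- The action of `g : SL(2,F)` on the projective line (as linear fractional
transformation). -/
def mapSL {F : Type} [Field F] (g : Matrix.SpecialLinearGroup (Fin 2) F) :
    Projectivization F (Fin 2 → F) → Projectivization F (Fin 2 → F) :=
  Projectivization.map (Matrix.SpecialLinearGroup.toLin' g : (Fin 2 → F) →ₗ[F] (Fin 2 → F))
    (Matrix.SpecialLinearGroup.toLin' g).injective

/-- The starter block: the unique subgroup of order `k` of `Fˣ` (the `k`-th roots
of unity, for `k ∣ q - 1`), regarded as a subset of the projective line. -/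
def starterB (F : Type) [Field F] (k : ℕ) : Set (Projectivization F (Fin 2 → F)) :=
  embedPt F '' {x : F | x ^ k = 1}

/-- The `PSL(2,F)`-orbit `GB` of the starter block. -/
def designBlocks (F : Type) [Field F] (k : ℕ) :
    Set (Set (Projectivization F (Fin 2 → F))) :=
  {S | ∃ g : Matrix.SpecialLinearGroup (Fin 2) F, S = mapSL g '' starterB F k}

/-- `GB` is the block set of a `3-(q+1, k, lam)` design: `lam` is positive and every
3-subset of the projective line is contained in exactly `lam` blocks. -/
def isThreeDesign (F : Type) [Field F] (k lam : ℕ) : Prop :=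
  0 < lam ∧
    ∀ T : Finset (Projectivization F (Fin 2 → F)), T.card = 3 →
      {S ∈ designBlocks F k | (T : Set (Projectivization F (Fin 2 → F))) ⊆ S}.ncard = lam

/-- `(q, k)` gives a 3-design. -/
def gives3Design (F : Type) [Field F] (k : ℕ) : Prop :=
  ∃ lam : ℕ, isThreeDesign F k lam

/-!
Three distinct points of the projective line, spanned by vectors `a`, `b`, `c`, have an orientation
`χ([a,b] [b,c] [c,a]) = ±1`, where `[·,·]` is the determinant and `χ` the quadratic character. It is
a complete invariant of the ordered triple under `SL(2,F)`, and a matrix in `GL(2,F)` multiplies it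
by `χ(det)`. Double counting incidences between triples and blocks therefore shows that, in odd
characteristic, the orbit of a block is a 3-design if and only if the block contains some triple of
distinct points, and as many of orientation `1` as of orientation `-1`. For the block of `k`-th
roots of unity this compares the values of `χ((x - y) (y - z) (z - x))` at such roots. An extension
of odd degree contains no new `k`-th roots of unity when `k ∣ q - 1` and, taking norms, creates no
new squares, so the criterion is the same over both fields.
-/

open Function MulAction Projectivization

open scoped LinearAlgebra.Projectivization MatrixGroups Pointwise

section GroupAction

variable {G X ι : Type*} [Group G] [MulAction G X]

variable (G) in
/-- The number of blocks in the `G`-orbit of the block `B` that contain all points of the family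
`t`. -/
def blockCount (B : Set X) (t : ι → X) : ℕ :=
  {S ∈ orbit G B | Set.range t ⊆ S}.ncard

theorem range_smul_subset_smul_iff (g : G) (t : ι → X) (S : Set X) :
    Set.range (g • t) ⊆ g • S ↔ Set.range t ⊆ S := by
  rw [show Set.range (g • t) = g • Set.range t from (Set.smul_set_range g t).symm,
    Set.smul_set_subset_smul_set_iff]

theorem blockCount_smul (B : Set X) (g : G) (t : ι → X) :
    blockCount G B (g • t) = blockCount G B t := by
  have image_blocks : {S ∈ orbit G B | Set.range (g • t) ⊆ S} =
      g • {S ∈ orbit G B | Set.range t ⊆ S} := by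
    ext S
    obtain ⟨S, rfl⟩ := MulAction.surjective g S
    simp only [Set.smul_mem_smul_set_iff, Set.mem_ofPred_eq, range_smul_subset_smul_iff,
      ← orbit_eq_iff, orbit_smul]
  rw [blockCount, image_blocks, Set.ncard_smul_set, blockCount]

theorem ncard_orbit_inter_subset_smul (B : Set X) (g : G) (t : ι → X) :
    {s ∈ orbit G t | Set.range s ⊆ g • B}.ncard = {s ∈ orbit G t | Set.range s ⊆ B}.ncard := by
  have image_families : {s ∈ orbit G t | Set.range s ⊆ g • B} =
      g • {s ∈ orbit G t | Set.range s ⊆ B} := by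
    ext s
    obtain ⟨s, rfl⟩ := MulAction.surjective g s
    simp only [Set.smul_mem_smul_set_iff, Set.mem_ofPred_eq, range_smul_subset_smul_iff,
      ← orbit_eq_iff, orbit_smul]
  rw [image_families, Set.ncard_smul_set]

theorem ncard_orbit_mul_blockCount [Finite X] [Finite ι] (B : Set X) (t : ι → X) :
    (orbit G t).ncard * blockCount G B t =
      (orbit G B).ncard * {s ∈ orbit G t | Set.range s ⊆ B}.ncard := by
  classical
  have orbit_family_finite := (orbit G t).toFinite
  have orbit_block_finite := (orbit G B).toFinite
  rw [Set.ncard_eq_toFinset_card _ orbit_family_finite,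
    Set.ncard_eq_toFinset_card _ orbit_block_finite]
  refine Finset.card_mul_eq_card_mul (fun s S ↦ Set.range s ⊆ S) ?_ ?_
  · intro s hs
    obtain ⟨g, rfl⟩ := orbit_family_finite.mem_toFinset.mp hs
    rw [← blockCount_smul B g t, blockCount, ← Set.ncard_coe_finset]
    simp [Finset.coe_bipartiteAbove]
  · intro S hS
    obtain ⟨g, rfl⟩ := orbit_block_finite.mem_toFinset.mp hS
    rw [← ncard_orbit_inter_subset_smul B g t, ← Set.ncard_coe_finset]
    simp [Finset.coe_bipartiteBelow]

end GroupAction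

section Bracket

variable {R : Type*} [CommRing R]

/-- The determinant of the `2 × 2` matrix with rows `u` and `v`. -/
def bracket (u v : Fin 2 → R) : R :=
  u 0 * v 1 - u 1 * v 0

/-- The cyclic product of the brackets of three vectors: rescaling the vectors changes it by a
square, so that its square class is an invariant of the three points they span. -/
def tripleBracket (v : Fin 3 → Fin 2 → R) : R :=
  bracket (v 0) (v 1) * bracket (v 1) (v 2) * bracket (v 2) (v 0)

theorem bracket_mulVec (M : Matrix (Fin 2) (Fin 2) R) (u v : Fin 2 → R) :
    bracket (M *ᵥ u) (M *ᵥ v) = M.det * bracket u v := by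
  simp only [bracket, mulVec, dotProduct, Fin.sum_univ_two, det_fin_two]
  ring

theorem tripleBracket_mulVec (M : Matrix (Fin 2) (Fin 2) R) (v : Fin 3 → Fin 2 → R) :
    tripleBracket (fun i ↦ M *ᵥ v i) = M.det ^ 3 * tripleBracket v := by
  simp only [tripleBracket, bracket_mulVec]
  ring

theorem tripleBracket_smul (c : Fin 3 → R) (v : Fin 3 → Fin 2 → R) :
    tripleBracket (fun i ↦ c i • v i) = (∏ i, c i) ^ 2 * tripleBracket v := by
  simp only [tripleBracket, bracket, Pi.smul_apply, smul_eq_mul, Fin.prod_univ_three]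
  ring

theorem bracket_self (u : Fin 2 → R) : bracket u u = 0 := by
  rw [bracket, mul_comm, sub_self]

theorem bracket_smul_sub_bracket_smul (a b c : Fin 2 → R) :
    bracket c b • a - bracket c a • b = bracket a b • c := by
  ext j
  fin_cases j <;>
  · simp only [bracket, Fin.zero_eta, Fin.mk_one, Pi.sub_apply, Pi.smul_apply, smul_eq_mul]
    ring

-- With `v = (a, b, c)` and `v' = (a', b', c')` the matrix represents
-- `x ↦ [a,c] [c',b'] [x,b] a' - [c,b] [c',a'] [a,x] b'`.
theorem exists_mulVec_eq_smul_and_det_eq (v v' : Fin 3 → Fin 2 → R) :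
    ∃ M : Matrix (Fin 2) (Fin 2) R,
      M.det = tripleBracket v * tripleBracket v' ∧ ∀ i, ∃ c : R, M *ᵥ v i = c • v' i := by
  let coeff₀ := bracket (v 0) (v 2) * bracket (v' 2) (v' 1)
  let coeff₁ := bracket (v 2) (v 1) * bracket (v' 2) (v' 0)
  let M := vecMulVec (coeff₀ • v' 0) ![v 1 1, -v 1 0] - vecMulVec (coeff₁ • v' 1) ![-v 0 1, v 0 0]
  have mulVec_eq (x : Fin 2 → R) :
      M *ᵥ x = (coeff₀ * bracket x (v 1)) • v' 0 - (coeff₁ * bracket (v 0) x) • v' 1 := by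
    ext j
    simp only [M, bracket, mulVec, dotProduct, Fin.sum_univ_two, Matrix.sub_apply, vecMulVec_apply,
      Pi.sub_apply, Pi.smul_apply, smul_eq_mul, cons_val_zero, cons_val_one]
    ring
  refine ⟨M, ?_, Fin.forall_fin_succ.mpr ⟨?_, Fin.forall_fin_two.mpr ⟨?_, ?_⟩⟩⟩
  · simp only [M, coeff₀, coeff₁, det_fin_two, Matrix.sub_apply, vecMulVec_apply,
      tripleBracket, bracket, Pi.smul_apply, smul_eq_mul, cons_val_zero, cons_val_one]
    ring
  · exact ⟨coeff₀ * bracket (v 0) (v 1), by simp [mulVec_eq, bracket_self]⟩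
  · exact ⟨-(coeff₁ * bracket (v 0) (v 1)), by simp [mulVec_eq, bracket_self]⟩
  · refine ⟨bracket (v 0) (v 2) * bracket (v 2) (v 1) * bracket (v' 0) (v' 1), ?_⟩
    rw [mul_smul _ (bracket (v' 0) (v' 1)), ← bracket_smul_sub_bracket_smul, smul_sub, smul_smul,
      smul_smul, show Fin.succ 1 = (2 : Fin 3) from rfl, mulVec_eq]
    congr 2 <;> ring

end Bracket

section ProjectiveLine

variable {F : Type*} [Field F]

theorem bracket_eq_zero_iff {u v : Fin 2 → F} (hu : u ≠ 0) (hv : v ≠ 0) :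
    bracket u v = 0 ↔ mk F u hu = mk F v hv := by
  have bracket_eq_det : bracket u v = (of ![u, v]).det := by
    simp only [bracket, det_fin_two, of_apply, cons_val_zero, cons_val_one]
  rw [← not_iff_not, ← Ne.eq_def (mk F u hu), ← independent_pair_iff_ne,
    independent_mk_iff_LinearIndependent, bracket_eq_det, ← Ne.eq_def, ← isUnit_iff_ne_zero,
    ← isUnit_iff_isUnit_det, ← linearIndependent_rows_iff_isUnit]
  rfl

theorem tripleBracket_ne_zero_iff {v : Fin 3 → Fin 2 → F} (hv : ∀ i, v i ≠ 0) :
    tripleBracket v ≠ 0 ↔ Injective fun i ↦ mk F (v i) (hv i) := by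
  have bracket_ne_zero (i j : Fin 3) :
      bracket (v i) (v j) ≠ 0 ↔ mk F (v i) (hv i) ≠ mk F (v j) (hv j) :=
    (bracket_eq_zero_iff (hv i) (hv j)).not
  simp only [tripleBracket, mul_ne_zero_iff, bracket_ne_zero]
  refine ⟨fun h i j hij ↦ ?_, fun h ↦ ⟨⟨?_, ?_⟩, ?_⟩⟩
  · fin_cases i <;> fin_cases j <;> first | rfl | grind
  all_goals exact h.ne (by decide)

theorem exists_generalLinearGroup_smul_eq {t t' : Fin 3 → ℙ F (Fin 2 → F)} (ht : Injective t)
    (ht' : Injective t') : ∃ g : GL (Fin 2) F, g • t = t' := by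
  have tripleBracket_rep_ne_zero {s : Fin 3 → ℙ F (Fin 2 → F)} (hs : Injective s) :
      (tripleBracket fun i ↦ (s i).rep) ≠ 0 := by
    rw [tripleBracket_ne_zero_iff fun i ↦ (s i).rep_nonzero]
    simpa only [mk_rep] using hs
  obtain ⟨M, hdet, hM⟩ := exists_mulVec_eq_smul_and_det_eq
    (fun i ↦ (t i).rep) (fun i ↦ (t' i).rep)
  have hdet_ne_zero : M.det ≠ 0 :=
    hdet ▸ mul_ne_zero (tripleBracket_rep_ne_zero ht) (tripleBracket_rep_ne_zero ht')
  refine ⟨GeneralLinearGroup.mkOfDetNeZero M hdet_ne_zero, funext fun i ↦ ?_⟩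
  obtain ⟨c, hc⟩ := hM i
  rw [Pi.smul_apply, ← mk_rep (t i), ← mk_rep (t' i)]
  exact (mk_eq_mk_iff' F _ _ _ _).mpr ⟨c, hc.symm⟩

theorem exists_specialLinearGroup_smul_eq_of_isSquare_det {g : GL (Fin 2) F}
    (hg : IsSquare g.1.det) : ∃ h : SL(2, F), ∀ p : ℙ F (Fin 2 → F), h • p = g • p := by
  obtain ⟨s, hs⟩ := hg
  have hs₀ : s ≠ 0 := by
    rintro rfl
    exact g.det_ne_zero (by simpa using hs)
  have hdet_one : (s⁻¹ • g.1).det = 1 := by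
    rw [det_smul, hs, Fintype.card_fin]
    field_simp
  let h : SL(2, F) := ⟨s⁻¹ • g.1, hdet_one⟩
  refine ⟨h, fun p ↦ ?_⟩
  rw [← mk_rep p]
  exact (mk_eq_mk_iff' F _ _ _ _).mpr ⟨s⁻¹, (smul_mulVec s⁻¹ g.1 p.rep).symm⟩

theorem orbit_specialLinearGroup_eq_orbit_ker_det {ι : Type*} (t : ι → ℙ F (Fin 2 → F)) :
    orbit SL(2, F) t = orbit (GeneralLinearGroup.det (n := Fin 2) (R := F)).ker t := by
  ext s
  constructor
  · rintro ⟨h, rfl⟩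
    exact ⟨⟨h, Units.ext h.2⟩, rfl⟩
  · rintro ⟨⟨g, hg⟩, rfl⟩
    exact ⟨⟨g, congrArg Units.val hg⟩, rfl⟩

theorem ncard_orbit_eq_of_injective {t t' : Fin 3 → ℙ F (Fin 2 → F)} (ht : Injective t)
    (ht' : Injective t') : (orbit SL(2, F) t').ncard = (orbit SL(2, F) t).ncard := by
  obtain ⟨g, rfl⟩ := exists_generalLinearGroup_smul_eq ht ht'
  rw [orbit_specialLinearGroup_eq_orbit_ker_det, ← smul_orbit_eq_orbit_smul, Set.ncard_smul_set,
    orbit_specialLinearGroup_eq_orbit_ker_det]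

variable [Fintype F] [DecidableEq F]

/-- The square class of the triple bracket of three points, as a value of the quadratic character.
It vanishes exactly if two of the points coincide. -/
def orientation (t : Fin 3 → ℙ F (Fin 2 → F)) : ℤ :=
  quadraticChar F (tripleBracket fun i ↦ (t i).rep)

theorem orientation_mk (v : Fin 3 → Fin 2 → F) (hv : ∀ i, v i ≠ 0) :
    orientation (fun i ↦ mk F (v i) (hv i)) = quadraticChar F (tripleBracket v) := by
  choose c hc using fun i ↦ exists_smul_eq_mk_rep F (v i) (hv i)
  have hc₀ : ∏ i, (c i : F) ≠ 0 := Finset.prod_ne_zero_iff.mpr fun i _ ↦ (c i).ne_zero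
  simp only [orientation, ← hc, Units.smul_def]
  rw [tripleBracket_smul, map_mul, quadraticChar_sq_one' hc₀, one_mul]

theorem orientation_ne_zero_iff (t : Fin 3 → ℙ F (Fin 2 → F)) :
    orientation t ≠ 0 ↔ Injective t := by
  rw [orientation, ne_eq, quadraticChar_eq_zero_iff, ← ne_eq,
    tripleBracket_ne_zero_iff fun i ↦ (t i).rep_nonzero]
  simp only [mk_rep]

theorem orientation_eq_one_or_neg_one {t : Fin 3 → ℙ F (Fin 2 → F)} (ht : Injective t) :
    orientation t = 1 ∨ ringChar F ≠ 2 ∧ orientation t = -1 := by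
  have hne : (tripleBracket fun i ↦ (t i).rep) ≠ 0 :=
    quadraticChar_eq_zero_iff.not.mp ((orientation_ne_zero_iff t).mpr ht)
  by_cases hF : ringChar F = 2
  · exact .inl (quadraticChar_eq_one_of_char_two hF hne)
  · exact (quadraticChar_dichotomy hne).imp_right (.intro hF)

theorem orientation_generalLinearGroup_smul (g : GL (Fin 2) F) (t : Fin 3 → ℙ F (Fin 2 → F)) :
    orientation (g • t) = quadraticChar F g.1.det * orientation t := by
  have smul_eq_mk : g • t = fun i ↦ mk F (g.1 *ᵥ (t i).rep)
      ((smul_ne_zero_iff_ne g).mpr (t i).rep_nonzero) := by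
    funext i
    conv_lhs => rw [Pi.smul_apply, ← mk_rep (t i), smul_mk]
    rfl
  rw [smul_eq_mk, orientation_mk, tripleBracket_mulVec, map_mul, pow_succ, map_mul,
    quadraticChar_sq_one' (GeneralLinearGroup.det_ne_zero g), one_mul]
  rfl

theorem orientation_specialLinearGroup_smul (g : SL(2, F)) (t : Fin 3 → ℙ F (Fin 2 → F)) :
    orientation (g • t) = orientation t :=
  (orientation_generalLinearGroup_smul (g : GL (Fin 2) F) t).trans (by simp)

theorem exists_injective_orientation_eq {a : F} (ha : a ≠ 0) :
    ∃ t : Fin 3 → ℙ F (Fin 2 → F), Injective t ∧ orientation t = quadraticChar F a := by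
  let v : Fin 3 → Fin 2 → F := ![![1, 0], ![0, 1], ![a, 1]]
  have hv (i) : v i ≠ 0 := by fin_cases i <;> simp [v]
  have tripleBracket_eq : tripleBracket v = a := by simp [v, tripleBracket, bracket]
  exact ⟨_, (tripleBracket_ne_zero_iff hv).mp (tripleBracket_eq ▸ ha),
    (orientation_mk v hv).trans (congrArg _ tripleBracket_eq)⟩

theorem orbit_eq_setOf_orientation_eq {t : Fin 3 → ℙ F (Fin 2 → F)} (ht : Injective t) :
    orbit SL(2, F) t = {s | orientation s = orientation t} := by
  have orientation_ne_zero := (orientation_ne_zero_iff t).mpr ht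
  ext s
  refine ⟨?_, fun (hs : orientation s = orientation t) ↦ ?_⟩
  · rintro ⟨h, rfl⟩
    exact orientation_specialLinearGroup_smul h t
  · obtain ⟨g, rfl⟩ := exists_generalLinearGroup_smul_eq ht
      ((orientation_ne_zero_iff s).mp (hs ▸ orientation_ne_zero))
    have quadraticChar_det : quadraticChar F g.1.det = 1 := by
      rwa [orientation_generalLinearGroup_smul, mul_eq_right₀ orientation_ne_zero] at hs
    obtain ⟨h, hh⟩ := exists_specialLinearGroup_smul_eq_of_isSquare_det
      ((quadraticChar_one_iff_isSquare g.det_ne_zero).mp quadraticChar_det)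
    exact ⟨h, funext fun i ↦ hh (t i)⟩

end ProjectiveLine

section Design

variable {F : Type} [Field F]

theorem designBlocks_eq_orbit (k : ℕ) : designBlocks F k = orbit SL(2, F) (starterB F k) :=
  Set.ext fun _ ↦ exists_congr fun _ ↦ eq_comm

theorem embedPt_injective : Injective (embedPt F) := fun x y hxy ↦ by
  simpa [bracket, sub_eq_zero] using (bracket_eq_zero_iff _ _).mpr hxy

theorem range_subset_starterB_iff {ι : Type*} {t : ι → ℙ F (Fin 2 → F)} {k : ℕ} :
    Set.range t ⊆ starterB F k ↔ ∃ x : ι → F, (∀ i, x i ^ k = 1) ∧ embedPt F ∘ x = t := by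
  simp only [Set.range_subset_iff, starterB, Set.mem_image, Set.mem_ofPred_eq, funext_iff,
    ← forall_and]
  exact Classical.skolem

theorem isThreeDesign_iff_forall_injective {k lam : ℕ} :
    isThreeDesign F k lam ↔ 0 < lam ∧ ∀ t : Fin 3 → ℙ F (Fin 2 → F), Injective t →
      blockCount SL(2, F) (starterB F k) t = lam := by
  rw [isThreeDesign, designBlocks_eq_orbit]
  refine and_congr_right fun _ ↦ ⟨fun h t ht ↦ ?_, fun h T hT ↦ ?_⟩
  · simpa [blockCount] using h (Finset.univ.map ⟨t, ht⟩) (by simp)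
  · let e : Fin 3 ≃ T := (T.equivFinOfCardEq hT).symm
    have range_eq : Set.range (Subtype.val ∘ e) = T := by simp
    rw [← range_eq]
    exact h _ (Subtype.val_injective.comp e.injective)

variable [Fintype F] [DecidableEq F]

variable (F) in
/-- The triples of `k`-th roots of unity whose points on the projective line have orientation `ε`.
For `ε ≠ 0` the entries of such a triple are distinct. -/
def orientedRootTriples (k : ℕ) (ε : ℤ) : Set (Fin 3 → F) :=
  {x | (∀ i, x i ^ k = 1) ∧ quadraticChar F ((x 0 - x 1) * (x 1 - x 2) * (x 2 - x 0)) = ε}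

theorem orientation_embedPt_comp (x : Fin 3 → F) :
    orientation (embedPt F ∘ x) = quadraticChar F ((x 0 - x 1) * (x 1 - x 2) * (x 2 - x 0)) := by
  refine (orientation_mk (fun i ↦ ![x i, 1]) _).trans ?_
  simp [tripleBracket, bracket]

theorem ncard_orbit_inter_starterB {t : Fin 3 → ℙ F (Fin 2 → F)} (ht : Injective t) (k : ℕ) :
    {s ∈ orbit SL(2, F) t | Set.range s ⊆ starterB F k}.ncard =
      (orientedRootTriples F k (orientation t)).ncard := by
  rw [← Set.ncard_image_of_injective _ (embedPt_injective (F := F)).comp_left]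
  congr 1
  ext s
  rw [orbit_eq_setOf_orientation_eq ht, Set.mem_sep_iff, range_subset_starterB_iff]
  constructor
  · rintro ⟨hs, x, hx, rfl⟩
    exact ⟨x, ⟨hx, orientation_embedPt_comp x ▸ hs⟩, rfl⟩
  · rintro ⟨x, ⟨hx, horient⟩, rfl⟩
    exact ⟨(orientation_embedPt_comp x).trans horient, x, hx, rfl⟩

theorem exists_mul_blockCount_eq (k : ℕ) : ∃ a b : ℕ, 0 < a ∧ 0 < b ∧
    ∀ t : Fin 3 → ℙ F (Fin 2 → F), Injective t →
      a * blockCount SL(2, F) (starterB F k) t =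
        b * (orientedRootTriples F k (orientation t)).ncard := by
  obtain ⟨t₀, ht₀, -⟩ := exists_injective_orientation_eq (one_ne_zero (α := F))
  refine ⟨(orbit SL(2, F) t₀).ncard, (orbit SL(2, F) (starterB F k)).ncard,
    (nonempty_orbit t₀).ncard_pos, (nonempty_orbit _).ncard_pos, fun t ht ↦ ?_⟩
  rw [← ncard_orbit_eq_of_injective ht₀ ht, ncard_orbit_mul_blockCount,
    ncard_orbit_inter_starterB ht]

theorem gives3Design_iff (k : ℕ) :
    gives3Design F k ↔ 0 < (orientedRootTriples F k 1).ncard ∧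
      (ringChar F ≠ 2 →
        (orientedRootTriples F k (-1)).ncard = (orientedRootTriples F k 1).ncard) := by
  obtain ⟨a, b, ha, hb, hab⟩ := exists_mul_blockCount_eq (F := F) k
  obtain ⟨t₁, ht₁, ht₁_orientation⟩ := exists_injective_orientation_eq (one_ne_zero (α := F))
  rw [map_one] at ht₁_orientation
  have hab₁ := ht₁_orientation ▸ hab t₁ ht₁
  simp only [gives3Design, isThreeDesign_iff_forall_injective]
  constructor
  · rintro ⟨lam, hlam, hcount⟩
    rw [hcount t₁ ht₁] at hab₁
    refine ⟨Nat.pos_of_mul_pos_left (hab₁ ▸ Nat.mul_pos ha hlam), fun hF ↦ ?_⟩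
    obtain ⟨c, hc⟩ := quadraticChar_exists_neg_one' hF
    obtain ⟨t, ht, ht_orientation⟩ := exists_injective_orientation_eq c.ne_zero
    refine Nat.eq_of_mul_eq_mul_left hb ?_
    rw [← hab₁, ← hcount t ht, hab t ht, ht_orientation, hc]
  · rintro ⟨hpos, hchar⟩
    refine ⟨blockCount SL(2, F) (starterB F k) t₁,
      Nat.pos_of_mul_pos_left (hab₁ ▸ Nat.mul_pos hb hpos), fun t ht ↦ ?_⟩
    refine Nat.eq_of_mul_eq_mul_left ha ?_
    rw [hab t ht, hab₁]
    rcases orientation_eq_one_or_neg_one ht with h | ⟨hF, h⟩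
    · rw [h]
    · rw [h, hchar hF]

end Design

section FieldExtension

theorem isSquare_algebraMap_iff {F K : Type*} [Field F] [Field K] [Algebra F K]
    (hodd : Odd (Module.finrank F K)) {x : F} : IsSquare (algebraMap F K x) ↔ IsSquare x := by
  refine ⟨fun ⟨y, hy⟩ ↦ ?_, fun hx ↦ hx.map (algebraMap F K)⟩
  rcases eq_or_ne x 0 with rfl | hx
  · exact .zero
  obtain ⟨m, hm⟩ := hodd
  have norm_mul_norm : Algebra.norm F y * Algebra.norm F y = x ^ (2 * m + 1) := by
    rw [← hm, ← Algebra.norm_algebraMap, hy, map_mul]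
  refine ⟨Algebra.norm F y / x ^ m, ?_⟩
  rw [div_mul_div_comm, norm_mul_norm]
  field_simp
  ring

theorem mem_range_algebraMap_of_pow_card_eq {F K : Type*} [Field F] [Fintype F] [CommRing K]
    [IsDomain K] [Algebra F K] {y : K} (hy : y ^ Fintype.card F = y) :
    y ∈ (algebraMap F K).range := by
  have splits : (Polynomial.X ^ Fintype.card F - Polynomial.X : Polynomial F).Splits := by
    simpa using (FiniteField.isSplittingField_sub F F).splits
  refine splits.mem_range_of_isRoot
    (FiniteField.X_pow_card_sub_X_ne_zero F Fintype.one_lt_card) ?_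
  simp [hy]

theorem mem_range_algebraMap_of_pow_eq_one {F K : Type*} [Field F] [Fintype F] [CommRing K]
    [IsDomain K] [Algebra F K] {k : ℕ} (hk : k ∣ Fintype.card F - 1) {y : K} (hy : y ^ k = 1) :
    y ∈ (algebraMap F K).range := by
  obtain ⟨e, he⟩ := hk
  refine mem_range_algebraMap_of_pow_card_eq ?_
  rw [← Nat.sub_add_cancel Fintype.card_pos, he, pow_succ, pow_mul, hy, one_pow, one_mul]

theorem quadraticChar_algebraMap {F K : Type*} [Field F] [Fintype F] [DecidableEq F] [Field K]
    [Fintype K] [DecidableEq K] [Algebra F K] (hodd : Odd (Module.finrank F K)) (x : F) :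
    quadraticChar K (algebraMap F K x) = quadraticChar F x := by
  simp only [quadraticChar_apply, quadraticCharFun, isSquare_algebraMap_iff hodd,
    FaithfulSMul.algebraMap_eq_zero_iff]

theorem exists_algebra_finrank_eq {F K : Type*} [Field F] [Fintype F] [Field K] [Fintype K] {n : ℕ}
    (hn : n ≠ 0) (hcard : Fintype.card K = Fintype.card F ^ n) :
    ∃ _ : Algebra F K, Module.finrank F K = n := by
  obtain ⟨p, _⟩ := CharP.exists F
  have : Fact p.Prime := ⟨CharP.char_is_prime F p⟩
  have : NeZero n := ⟨hn⟩
  let E := FiniteField.Extension F p n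
  have : Fintype E := Fintype.ofFinite E
  have card_eq : Fintype.card E = Fintype.card K := by
    rw [hcard, ← Nat.card_eq_fintype_card, ← Nat.card_eq_fintype_card,
      FiniteField.natCard_extension]
  let _ : Algebra F K :=
    ((FiniteField.ringEquivOfCardEq card_eq).toRingHom.comp (algebraMap F E)).toAlgebra
  refine ⟨inferInstance, Nat.pow_right_injective (Fintype.one_lt_card (α := F)) ?_⟩
  exact Module.card_eq_pow_finrank.symm.trans hcard

variable {F F' : Type} [Field F] [Fintype F] [Field F'] [Algebra F F']

theorem orientedRootTriples_eq_image [DecidableEq F] [Fintype F'] [DecidableEq F']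
    (hodd : Odd (Module.finrank F F')) {k : ℕ} (hk : k ∣ Fintype.card F - 1) (ε : ℤ) :
    orientedRootTriples F' k ε = (algebraMap F F' ∘ ·) '' orientedRootTriples F k ε := by
  have mem_iff (x : Fin 3 → F) :
      algebraMap F F' ∘ x ∈ orientedRootTriples F' k ε ↔ x ∈ orientedRootTriples F k ε := by
    simp only [orientedRootTriples, Set.mem_ofPred_eq, Function.comp_apply, ← map_sub, ← map_mul,
      ← map_pow, quadraticChar_algebraMap hodd, FaithfulSMul.algebraMap_eq_one_iff]
  ext y
  refine ⟨fun hy ↦ ?_, ?_⟩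
  · choose x hx using fun i ↦ mem_range_algebraMap_of_pow_eq_one (F := F) hk (hy.1 i)
    obtain rfl : algebraMap F F' ∘ x = y := funext hx
    exact ⟨x, (mem_iff x).mp hy, rfl⟩
  · rintro ⟨x, hx, rfl⟩
    exact (mem_iff x).mpr hx

theorem gives3Design_iff_of_odd_finrank (hodd : Odd (Module.finrank F F')) {k : ℕ}
    (hk : k ∣ Fintype.card F - 1) : gives3Design F' k ↔ gives3Design F k := by
  classical
  have : Module.Finite F F' := Module.finite_of_finrank_pos hodd.pos
  have : Fintype F' := @Fintype.ofFinite F' (Module.finite_of_finite F)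
  have ncard_eq (ε : ℤ) :
      (orientedRootTriples F' k ε).ncard = (orientedRootTriples F k ε).ncard := by
    rw [orientedRootTriples_eq_image hodd hk,
      Set.ncard_image_of_injective _ (algebraMap F F').injective.comp_left]
  simp only [gives3Design_iff, ncard_eq, Algebra.ringChar_eq F F']

end FieldExtension

theorem stmt_9_general (F F' : Type) [Field F] [Fintype F] [Field F'] [Fintype F'] {k n : ℕ}
    (hcard : Fintype.card F' = Fintype.card F ^ n) (hk : k ∣ Fintype.card F - 1) (hn : Odd n) :
    gives3Design F' k ↔ gives3Design F k := by
  classical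
  obtain ⟨_, hfinrank⟩ := exists_algebra_finrank_eq hn.pos.ne' hcard
  exact gives3Design_iff_of_odd_finrank (hfinrank ▸ hn) hk

/-- Proposition 3.3: if `(q,k)` gives a 3-design, then so does `(q^n, k)` for odd
`n` (here `F'` is the field of order `q^n`). -/
theorem stmt_9 (F F' : Type) [Field F] [Fintype F] [DecidableEq F]
    [Field F'] [Fintype F'] [DecidableEq F']
    (q k n : ℕ) (hq : Fintype.card F = q) (hq' : Fintype.card F' = q ^ n)
    (hqodd : Odd q) (hq4 : q % 4 = 1)
    (hkdvd : k ∣ q - 1) (hk3 : 3 < k) (hkq : k < q - 1)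
    (he : Even ((q - 1) / k))
    (hn : Odd n) (hn0 : 0 < n)
    (hdes : gives3Design F k) :
    gives3Design F' k := by
  subst hq
  exact (stmt_9_general F F' hq' hkdvd hn).mpr hdes
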